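/- Let S be a set of 2k points in the plane in general position such that exactly one point Q of S lies in the interior of the convex hull of S, and suppose that it is NOT the case that for every point P ∈ S \ {Q} the line through Q and P halves S (i.e., there exists P ∈ S \ {Q} such that the two open half-planes bounded by the line through Q and P contain unequal numbers of points of S). Then there exists a point P₀ ∈ S \ {Q} such that the two open half-planes bounded by the line through Q and P₀ contain exactly k − 2 and k points of S, respectively. -/

import Mathlib

open scoped Classical

/-- Points in the plane. -/
abbrev Pt : Type := ℝ × ℝ

/-- A finite planar point set is in *general position* if no three of its
points are collinear. -/
def GeneralPosition (S : Finset Pt) : Prop :=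
  ∀ p ∈ S, ∀ q ∈ S, ∀ r ∈ S, p ≠ q → p ≠ r → q ≠ r →
    ¬ Collinear ℝ ({p, q, r} : Set Pt)

/-- The closed straight-line segment spanned by an unordered pair of points. -/
noncomputable def seg : Sym2 Pt → Set Pt :=
  Sym2.lift ⟨fun a b => segment ℝ a b, fun a b => segment_symm ℝ a b⟩

/-- `M` is a non-crossing perfect matching of `S`: a partition of `S` into
unordered pairs (of distinct points) whose closed segments are pairwise disjoint. -/
def IsNCMatching (S : Finset Pt) (M : Finset (Sym2 Pt)) : Prop :=
  (∀ e ∈ M, ¬ e.IsDiag) ∧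
  (∀ e ∈ M, ∀ p, p ∈ e → p ∈ S) ∧
  (∀ p ∈ S, ∃! e, e ∈ M ∧ p ∈ e) ∧
  (∀ e ∈ M, ∀ f ∈ M, e ≠ f → Disjoint (seg e) (seg f))

/-- The number of non-crossing perfect matchings of `S`. -/
noncomputable def pm (S : Finset Pt) : ℕ :=
  Set.ncard {M : Finset (Sym2 Pt) | IsNCMatching S M}

/-- `S` is in convex position: no point of `S` lies in the convex hull of the
other points. -/
def ConvexPosition (S : Finset Pt) : Prop :=
  ∀ p ∈ S, p ∉ convexHull ℝ (↑(S.erase p) : Set Pt)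

/-- The signed side of `X` with respect to the directed line from `Q` to `P`.
The two open half-planes bounded by the line through `Q` and `P` are
`{X | 0 < sideOf Q P X}` and `{X | sideOf Q P X < 0}`. -/
def sideOf (Q P X : Pt) : ℝ :=
  (P.1 - Q.1) * (X.2 - Q.2) - (P.2 - Q.2) * (X.1 - Q.1)

/-- Segment `AB` pierces segment `CD`: the closed segments are disjoint, but the
affine line through `A` and `B` meets the closed segment `CD`. -/
def Pierces (A B C D : Pt) : Prop :=
  Disjoint (segment ℝ A B) (segment ℝ C D) ∧
  ((affineSpan ℝ ({A, B} : Set Pt) : Set Pt) ∩ segment ℝ C D).Nonempty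

/-- The matching `M` of `S` has the *piercing property*: it contains pairs
`{A,B}` and `{C,D}` with `A` on the boundary of the convex hull of `S`
and `AB` piercing `CD`. -/
def HasPiercing (S : Finset Pt) (M : Finset (Sym2 Pt)) : Prop :=
  ∃ A B C D : Pt, s(A, B) ∈ M ∧ s(C, D) ∈ M ∧
    A ∈ frontier (convexHull ℝ (S : Set Pt)) ∧ Pierces A B C D

/-- The exceptional order type with interior point `Q`: `Q` is the unique point
of `S` interior to the convex hull of `S`, and for every other point `P` of `S`
each open half-plane bounded by the line through `Q` and `P` contains exactly
two points of `S`. -/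
def ExceptionalAt (S : Finset Pt) (Q : Pt) : Prop :=
  (↑S ∩ interior (convexHull ℝ (S : Set Pt))) = {Q} ∧
  ∀ P ∈ S, P ≠ Q →
    (S.filter (fun X => 0 < sideOf Q P X)).card = 2 ∧
    (S.filter (fun X => sideOf Q P X < 0)).card = 2

/-- The exceptional order type of Figure 1. -/
def Exceptional (S : Finset Pt) : Prop :=
  ∃ Q ∈ S, ExceptionalAt S Q

noncomputable def sg (x : ℝ) : ℤ := if 0 < x then 1 else if x < 0 then -1 else 0

theorem sg_pos {x : ℝ} (h : 0 < x) : sg x = 1 := by simp [sg, h]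
theorem sg_neg {x : ℝ} (h : x < 0) : sg x = -1 := by simp [sg, h, not_lt.2 h.le]
theorem sg_zero : sg 0 = 0 := by simp [sg]

theorem sg_mul (x y : ℝ) : sg (x * y) = sg x * sg y := by
  rcases lt_trichotomy x 0 with hx | hx | hx <;> rcases lt_trichotomy y 0 with hy | hy | hy
  · rw [sg_pos (mul_pos_of_neg_of_neg hx hy), sg_neg hx, sg_neg hy]; rfl
  · subst hy; simp [sg_zero]
  · rw [sg_neg (mul_neg_of_neg_of_pos hx hy), sg_neg hx, sg_pos hy]; rfl
  · subst hx; simp [sg_zero]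
  · subst hx; simp [sg_zero]
  · subst hx; simp [sg_zero]
  · rw [sg_neg (mul_neg_of_pos_of_neg hx hy), sg_pos hx, sg_neg hy]; rfl
  · subst hy; simp [sg_zero]
  · rw [sg_pos (mul_pos hx hy), sg_pos hx, sg_pos hy]; rfl

noncomputable def GG {ι : Type*} (A : Finset ι) (key : ι → ℝ) (ε : ι → ℤ) (i : ι) : ℤ :=
  ∑ l ∈ A, ε l * sg (key l - key i)

theorem GG_step {ι : Type*} (A : Finset ι) (key : ι → ℝ) (ε : ι → ℤ)
    (hk : ∀ a ∈ A, ∀ b ∈ A, key a = key b → a = b) {i j : ι} (hi : i ∈ A) (hj : j ∈ A)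
    (hij : key i < key j) (hb : ∀ l ∈ A, key i < key l → key j ≤ key l) :
    GG A key ε j = GG A key ε i - ε i - ε j := by
  have h1 : ∑ l ∈ A, (if l = i then ε l else 0) = ε i := by simp [hi]
  have h2 : ∑ l ∈ A, (if l = j then ε l else 0) = ε j := by simp [hj]
  rw [← h1, ← h2]
  unfold GG
  rw [← Finset.sum_sub_distrib, ← Finset.sum_sub_distrib]
  refine Finset.sum_congr rfl fun l hl => ?_
  by_cases hli : l = i
  · subst hli
    have : l ≠ j := by rintro rfl; exact lt_irrefl _ hij
    simp [this, sg_zero, sg_neg (sub_neg.2 hij)]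
  by_cases hlj : l = j
  · subst hlj
    simp [hli, sg_zero, sg_pos (sub_pos.2 hij)]
  simp only [hli, hlj, if_false, sub_zero]
  rcases lt_trichotomy (key l) (key i) with h | h | h
  · rw [sg_neg (sub_neg.2 h), sg_neg (sub_neg.2 (h.trans hij))]
  · exact absurd (hk _ hl _ hi h) hli
  · have h3 : key j < key l :=
      lt_of_le_of_ne (hb l hl h) (fun h' => hlj (hk _ hl _ hj h'.symm))
    rw [sg_pos (sub_pos.2 h), sg_pos (sub_pos.2 h3)]

theorem GG_ends {ι : Type*} (A : Finset ι) (key : ι → ℝ) (ε : ι → ℤ)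
    (hk : ∀ a ∈ A, ∀ b ∈ A, key a = key b → a = b) {i j : ι} (hi : i ∈ A) (hj : j ∈ A)
    (hmin : ∀ l ∈ A, key i ≤ key l) (hmax : ∀ l ∈ A, key l ≤ key j) :
    GG A key ε i + GG A key ε j = ε j - ε i := by
  have h1 : ∑ l ∈ A, (if l = i then ε l else 0) = ε i := by simp [hi]
  have h2 : ∑ l ∈ A, (if l = j then ε l else 0) = ε j := by simp [hj]
  rw [← h1, ← h2]
  unfold GG
  rw [← Finset.sum_sub_distrib, ← Finset.sum_add_distrib]
  refine Finset.sum_congr rfl fun l hl => ?_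
  have key1 : ∀ a ∈ A, ∀ b ∈ A, a ≠ b → key a ≤ key b → key a < key b :=
    fun a ha b hb hab h => lt_of_le_of_ne h (fun h' => hab (hk _ ha _ hb h'))
  by_cases hli : l = i
  · subst hli
    by_cases hlj : l = j
    · subst hlj; simp [sg_zero]
    · simp [hlj, sg_zero, sg_neg (sub_neg.2 (key1 _ hl _ hj hlj (hmax _ hl)))]
  have hp := key1 _ hi _ hl (Ne.symm hli) (hmin _ hl)
  by_cases hlj : l = j
  · subst hlj
    simp [hli, sg_zero, sg_pos (sub_pos.2 hp)]
  have hq := key1 _ hl _ hj hlj (hmax _ hl)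
  simp [hli, hlj, sg_pos (sub_pos.2 hp), sg_neg (sub_neg.2 hq)]

theorem GG_max {ι : Type*} (A : Finset ι) (key : ι → ℝ) (ε : ι → ℤ)
    (hk : ∀ a ∈ A, ∀ b ∈ A, key a = key b → a = b)
    (hε : ∀ a ∈ A, ε a = 1 ∨ ε a = -1)
    (hev : ∀ a ∈ A, Even (GG A key ε a)) (hne : ∀ a ∈ A, GG A key ε a ≠ 2)
    {i j : ι} (hi : i ∈ A) (hgi : 2 < GG A key ε i)
    (hj : j ∈ A) (hmax : ∀ l ∈ A, key l ≤ key j) : 2 < GG A key ε j := by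
  obtain ⟨m, hm, hmm⟩ := Finset.exists_max_image (A.filter fun a => 2 < GG A key ε a) key
    ⟨i, by simp [hi, hgi]⟩
  simp only [Finset.mem_filter] at hm hmm
  by_cases h : (A.filter fun a => key m < key a).Nonempty
  · obtain ⟨n, hn, hnn⟩ := Finset.exists_min_image _ key h
    simp only [Finset.mem_filter] at hn hnn
    have hs := GG_step A key ε hk hm.1 hn.1 hn.2 (fun l hl h' => hnn l ⟨hl, h'⟩)
    have h1 := hε _ hm.1
    have h2 := hε _ hn.1
    obtain ⟨c, hc⟩ := hev _ hm.1
    have h3 := hne _ hn.1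
    have h4 : 2 < GG A key ε n := by omega
    exact absurd (hmm n ⟨hn.1, h4⟩) (not_le.2 hn.2)
  · have h5 : ¬ key m < key j := fun h' => h ⟨j, by simp [hj, h']⟩
    have : m = j := hk _ hm.1 _ hj (le_antisymm (hmax _ hm.1) (not_lt.1 h5))
    exact this ▸ hm.2

theorem GG_negneg {ι : Type*} (A : Finset ι) (key : ι → ℝ) (ε : ι → ℤ) (i : ι) :
    GG A (fun a => - key a) (fun a => - ε a) i = GG A key ε i := by
  unfold GG
  refine Finset.sum_congr rfl fun l _ => ?_
  have : - key l - - key i = (-1) * (key l - key i) := by ring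
  rw [this, sg_mul, sg_neg (by norm_num : (-1 : ℝ) < 0)]; ring

theorem GG_neg {ι : Type*} (A : Finset ι) (key : ι → ℝ) (ε : ι → ℤ) (i : ι) :
    GG A key (fun a => - ε a) i = - GG A key ε i := by
  unfold GG
  simp

theorem GG_not_gt {ι : Type*} (A : Finset ι) (key : ι → ℝ) (ε : ι → ℤ)
    (hk : ∀ a ∈ A, ∀ b ∈ A, key a = key b → a = b)
    (hε : ∀ a ∈ A, ε a = 1 ∨ ε a = -1)
    (hev : ∀ a ∈ A, Even (GG A key ε a)) (hne : ∀ a ∈ A, GG A key ε a ≠ 2)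
    {i : ι} (hi : i ∈ A) : ¬ 2 < GG A key ε i := by
  intro hgi
  obtain ⟨M, hM, hMM⟩ := Finset.exists_max_image A key ⟨i, hi⟩
  obtain ⟨m, hm, hmm⟩ := Finset.exists_min_image A key ⟨i, hi⟩
  have h1 := GG_max A key ε hk hε hev hne hi hgi hM hMM
  have h2 := GG_max A (fun a => - key a) (fun a => - ε a)
    (fun a ha b hb h => hk a ha b hb (neg_injective h))
    (fun a ha => by have := hε a ha; omega)
    (fun a ha => by rw [GG_negneg]; exact hev a ha)
    (fun a ha => by rw [GG_negneg]; exact hne a ha) hi (by rw [GG_negneg]; exact hgi) hm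
    (fun l hl => neg_le_neg (hmm l hl))
  rw [GG_negneg] at h2
  have h3 := GG_ends A key ε hk hm hM hmm hMM
  have := hε _ hm
  have := hε _ hM
  omega

theorem GG_exists {ι : Type*} (A : Finset ι) (key : ι → ℝ) (ε : ι → ℤ)
    (hk : ∀ a ∈ A, ∀ b ∈ A, key a = key b → a = b)
    (hε : ∀ a ∈ A, ε a = 1 ∨ ε a = -1)
    (hev : ∀ a ∈ A, Even (GG A key ε a))
    {i : ι} (hi : i ∈ A) (h0 : GG A key ε i ≠ 0) :
    ∃ a ∈ A, GG A key ε a = 2 ∨ GG A key ε a = -2 := by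
  by_contra! hcon
  have h1 := GG_not_gt A key ε hk hε hev (fun a ha => (hcon a ha).1) hi
  have h2 := GG_not_gt A key (fun a => - ε a) hk
    (fun a ha => by have := hε a ha; omega)
    (fun a ha => by rw [GG_neg]; exact (hev a ha).neg)
    (fun a ha => by rw [GG_neg]; have := (hcon a ha).2; omega) hi
  rw [GG_neg] at h2
  have h3 := hcon i hi
  obtain ⟨c, hc⟩ := hev i hi
  omega

theorem collinear_of_sideOf (Q P X : Pt) (hP : P ≠ Q) (h : sideOf Q P X = 0) :
    Collinear ℝ ({Q, P, X} : Set Pt) := by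
  rw [collinear_iff_of_mem (p₀ := Q) (by simp)]
  refine ⟨P - Q, ?_⟩
  unfold sideOf at h
  have hX : ∃ r : ℝ, X = r • (P - Q) +ᵥ Q := by
    by_cases h1 : P.1 - Q.1 = 0
    · have h2 : P.2 - Q.2 ≠ 0 := by
        intro h2
        exact hP (Prod.ext (by linarith) (by linarith))
      refine ⟨(X.2 - Q.2) / (P.2 - Q.2), ?_⟩
      have h3 : X.1 - Q.1 = 0 := by
        rw [h1] at h
        have : (P.2 - Q.2) * (X.1 - Q.1) = 0 := by linarith
        exact (mul_eq_zero.1 this).resolve_left h2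
      ext
      · simp [h1]; linarith
      · simp [h2]
    · refine ⟨(X.1 - Q.1) / (P.1 - Q.1), ?_⟩
      ext
      · simp [h1]
      · simp
        field_simp
        linarith
  intro p hp
  simp only [Set.mem_insert_iff, Set.mem_singleton_iff] at hp
  rcases hp with rfl | rfl | rfl
  · exact ⟨0, by simp⟩
  · exact ⟨1, by simp⟩
  · exact hX

theorem exists_functional (A : Finset Pt) (Q : Pt) (hA : ∀ P ∈ A, P ≠ Q) :
    ∃ t : ℝ, ∀ P ∈ A, (P.1 - Q.1) + t * (P.2 - Q.2) ≠ 0 := by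
  obtain ⟨t, ht⟩ := Infinite.exists_notMem_finset
    (A.image fun P => - (P.1 - Q.1) / (P.2 - Q.2))
  refine ⟨t, fun P hP h => ?_⟩
  by_cases h2 : P.2 - Q.2 = 0
  · rw [h2] at h
    exact hA P hP (Prod.ext (by linarith) (by linarith))
  · apply ht
    rw [Finset.mem_image]
    refine ⟨P, hP, ?_⟩
    field_simp
    linarith

theorem sum_sg (S : Finset Pt) (f : Pt → ℝ) :
    ∑ X ∈ S, sg (f X) = ((S.filter fun X => 0 < f X).card : ℤ) -
      ((S.filter fun X => f X < 0).card : ℤ) := by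
  rw [Finset.card_filter, Finset.card_filter]
  push_cast
  rw [← Finset.sum_sub_distrib]
  refine Finset.sum_congr rfl fun X _ => ?_
  rcases lt_trichotomy (f X) 0 with h | h | h
  · simp [sg_neg h, h, not_lt.2 h.le]
  · simp [h, sg_zero]
  · simp [sg_pos h, h, not_lt.2 h.le]

/-- If `S` has `2k` points in general position with exactly one
point `Q` interior to the convex hull, and not every line through `Q` and
another point of `S` halves `S`, then some line through `Q` and a point
`P₀ ∈ S` leaves exactly `k - 2` points of `S` on one side and `k` on the
other. -/
theorem exists_k_sub_two_k_line (k : ℕ) (S : Finset Pt)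
    (hcard : S.card = 2 * k) (hgp : GeneralPosition S) (Q : Pt) (hQ : Q ∈ S)
    (hint : (↑S ∩ interior (convexHull ℝ (S : Set Pt))) = {Q})
    (hnothalving : ∃ P ∈ S, P ≠ Q ∧
      (S.filter (fun X => 0 < sideOf Q P X)).card ≠
        (S.filter (fun X => sideOf Q P X < 0)).card) :
    ∃ P₀ ∈ S, P₀ ≠ Q ∧
      (((S.filter (fun X => 0 < sideOf Q P₀ X)).card = k - 2 ∧
        (S.filter (fun X => sideOf Q P₀ X < 0)).card = k) ∨
       ((S.filter (fun X => 0 < sideOf Q P₀ X)).card = k ∧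
        (S.filter (fun X => sideOf Q P₀ X < 0)).card = k - 2)) := by
  have hside : ∀ P ∈ S, P ≠ Q → ∀ X ∈ S, X ≠ Q → X ≠ P → sideOf Q P X ≠ 0 :=
    fun P hP hPQ X hX hXQ hXP h =>
      hgp Q hQ P hP X hX hPQ.symm hXQ.symm hXP.symm (collinear_of_sideOf Q P X hPQ h)
  have hsum : ∀ P ∈ S, P ≠ Q → (S.filter (fun X => 0 < sideOf Q P X)).card +
      (S.filter (fun X => sideOf Q P X < 0)).card + 2 = 2 * k := by
    intro P hP hPQ
    have h1 : (S.filter (fun X => 0 < sideOf Q P X)).card +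
      (S.filter (fun X => sideOf Q P X < 0)).card = ((S.erase Q).erase P).card := by
      rw [← Finset.card_union_of_disjoint]
      · congr 1
        ext X
        simp only [Finset.mem_union, Finset.mem_filter, Finset.mem_erase]
        constructor
        · rintro (⟨h, h'⟩ | ⟨h, h'⟩) <;> refine ⟨?_, ?_, h⟩ <;> rintro rfl <;>
            simp [sideOf, mul_comm] at h'
        · rintro ⟨h1, h2, h3⟩
          rcases lt_or_gt_of_ne (hside P hP hPQ X h3 h2 h1) with h | h
          · exact Or.inr ⟨h3, h⟩
          · exact Or.inl ⟨h3, h⟩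
      · rw [Finset.disjoint_filter]
        intro X _ h h'
        exact lt_asymm h h'
    have h2 := Finset.card_erase_add_one hQ
    have h3 := Finset.card_erase_add_one (Finset.mem_erase.2 ⟨hPQ, hP⟩)
    omega
  have hA : ∀ P ∈ S.erase Q, P ≠ Q := fun P hP => (Finset.mem_erase.1 hP).1
  obtain ⟨t, ht⟩ := exists_functional (S.erase Q) Q hA
  set ell : Pt → ℝ := fun P => (P.1 - Q.1) + t * (P.2 - Q.2) with hell
  set key : Pt → ℝ := fun P => (P.2 - Q.2) / ell P with hkey
  have hcross : ∀ P ∈ S.erase Q, ∀ X ∈ S.erase Q,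
      sideOf Q P X = ell P * (ell X * (key X - key P)) := by
    intro P hP X hX
    have h1 : ell P ≠ 0 := ht P hP
    have h2 : ell X ≠ 0 := ht X hX
    simp only [hkey]
    field_simp
    simp only [hell, sideOf]
    ring
  have hk : ∀ a ∈ S.erase Q, ∀ b ∈ S.erase Q, key a = key b → a = b := by
    intro a ha b hb h
    by_contra hab
    have h1 := hcross a ha b hb
    rw [h, sub_self, mul_zero, mul_zero] at h1
    rw [Finset.mem_erase] at ha hb
    exact hside a ha.2 ha.1 b hb.2 hb.1 (Ne.symm hab) h1
  have hε : ∀ a ∈ S.erase Q, sg (ell a) = 1 ∨ sg (ell a) = -1 := by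
    intro a ha
    rcases lt_or_gt_of_ne (ht a ha) with h | h
    · exact Or.inr (sg_neg h)
    · exact Or.inl (sg_pos h)
  have hG : ∀ P ∈ S.erase Q, ((S.filter (fun X => 0 < sideOf Q P X)).card : ℤ) -
      ((S.filter (fun X => sideOf Q P X < 0)).card : ℤ) =
      sg (ell P) * GG (S.erase Q) key (fun a => sg (ell a)) P := by
    intro P hP
    rw [← sum_sg S (fun X => sideOf Q P X), ← Finset.add_sum_erase S _ hQ]
    have : sideOf Q P Q = 0 := by simp [sideOf]
    rw [this, sg_zero, zero_add, GG, Finset.mul_sum]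
    refine Finset.sum_congr rfl fun X hX => ?_
    rw [hcross P hP X hX, sg_mul, sg_mul]
  have hev : ∀ a ∈ S.erase Q, Even (GG (S.erase Q) key (fun a => sg (ell a)) a) := by
    intro a ha
    have h1 := hG a ha
    have h2 := hsum a (Finset.mem_erase.1 ha).2 (Finset.mem_erase.1 ha).1
    rw [Int.even_iff]
    rcases hε a ha with h | h <;> rw [h] at h1 <;> omega
  obtain ⟨P, hP, hPQ, hne⟩ := hnothalving
  have hPA : P ∈ S.erase Q := Finset.mem_erase.2 ⟨hPQ, hP⟩
  obtain ⟨a, ha, h⟩ := GG_exists (S.erase Q) key (fun a => sg (ell a)) hk hε hev hPA (by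
    intro h0
    have h1 := hG P hPA
    rw [h0, mul_zero] at h1
    omega)
  have ha' := Finset.mem_erase.1 ha
  refine ⟨a, ha'.2, ha'.1, ?_⟩
  have h1 := hG a ha
  have h2 := hsum a ha'.2 ha'.1
  rcases hε a ha with h3 | h3 <;> rcases h with h | h <;> rw [h3, h] at h1 <;> omega
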